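/- The cyclic 2-coloring of K₁₇ determined by C₀ and C₁ has no monochromatic K_{5,2}: there do not exist disjoint subsets A, B of ZMod 17 with |A| = 5 and |B| = 2 such that a − b ∈ C₀ for every a ∈ A and b ∈ B, and likewise there are no such A, B with a − b ∈ C₁ for every a ∈ A and b ∈ B. -/

import Mathlib

/-- The `b₀` color class of the cyclic coloring of `K₁₇`: the difference set
`{1,2,4,8,9,13,15,16} ⊆ ZMod 17`. -/
def C0 : Finset (ZMod 17) := {1, 2, 4, 8, 9, 13, 15, 16}

/-- The `b₁` color class of the cyclic coloring of `K₁₇`: the difference set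
`{3,5,6,7,10,11,12,14} ⊆ ZMod 17`. -/
def C1 : Finset (ZMod 17) := {3, 5, 6, 7, 10, 11, 12, 14}

/-!
`C₀` and `C₁` are the nonzero squares and the nonsquares modulo 17, so this is the Paley coloring.
Let `χ` be the quadratic character of a finite field with `q` elements, `q` odd, let `ε = ±1` stand
for one of the two colors, and let `b ≠ c`. The weight `(1 + ε χ(x - b)) (1 + ε χ(x - c))` is never
negative, it is `4` whenever `x` is joined to both `b` and `c` in the color `ε`, and its sum over
all `x` is `q - 1` because `∑ χ(x - b) χ(x - c) = -1`. Hence `b` and `c` have at most `(q - 1) / 4`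
common neighbors in either color, and this bound is `4` for `q = 17`.
-/

section MulCharSums

variable {F R : Type*} [Field F] [Fintype F] [CommRing R] [IsDomain R]

theorem sum_mulChar_sub_eq_zero {χ : MulChar F R} (hχ : χ ≠ 1) (b : F) :
    ∑ x, χ (x - b) = 0 :=
  (Equiv.sum_comp (Equiv.subRight b) χ).trans (MulChar.sum_eq_zero_of_ne_one hχ)

theorem sum_mulChar_sub_mul_inv_sub {χ : MulChar F R} (hχ : χ ≠ 1) {b c : F} (hbc : b ≠ c) :
    ∑ x, χ (x - b) * χ⁻¹ (x - c) = -1 := by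
  have hcb : c - b ≠ 0 := sub_ne_zero.mpr hbc.symm
  have hunit : χ (c - b) * χ⁻¹ (c - b) = 1 := by
    rw [← MulChar.mul_apply, mul_inv_cancel, MulChar.one_apply hcb.isUnit]
  have hneg : χ⁻¹ (-1) = χ (-1) := by rw [MulChar.inv_apply', inv_neg_one]
  have hsq : χ (-1) * χ (-1) = 1 := by rw [← map_mul, neg_one_mul, neg_neg, map_one]
  calc ∑ x, χ (x - b) * χ⁻¹ (x - c)
      = ∑ y, χ ((c - b) * y + b - b) * χ⁻¹ ((c - b) * y + b - c) :=
        (Equiv.sum_comp ((Equiv.mulLeft₀ (c - b) hcb).trans (Equiv.addRight b)) _).symm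
    _ = ∑ y, χ (-1) * (χ y * χ⁻¹ (1 - y)) := by
        refine Finset.sum_congr rfl fun y _ ↦ ?_
        rw [show (c - b) * y + b - b = (c - b) * y by ring,
          show (c - b) * y + b - c = (c - b) * (-1 * (1 - y)) by ring]
        simp only [map_mul, hneg]
        linear_combination χ y * χ (-1) * χ⁻¹ (1 - y) * hunit
    _ = χ (-1) * jacobiSum χ χ⁻¹ := by rw [← Finset.mul_sum, jacobiSum]
    _ = -1 := by rw [jacobiSum_nontrivial_inv hχ, mul_neg, hsq]

theorem sum_one_add_mulChar_mul_one_add_inv {χ : MulChar F R} (hχ : χ ≠ 1) {b c : F}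
    (hbc : b ≠ c) (s t : R) :
    ∑ x, (1 + s * χ (x - b)) * (1 + t * χ⁻¹ (x - c)) = Fintype.card F - s * t := by
  have hexpand (x : F) : (1 + s * χ (x - b)) * (1 + t * χ⁻¹ (x - c)) =
      1 + s * χ (x - b) + t * χ⁻¹ (x - c) + s * t * (χ (x - b) * χ⁻¹ (x - c)) := by ring
  simp only [hexpand, Finset.sum_add_distrib, ← Finset.mul_sum, sum_mulChar_sub_eq_zero hχ,
    sum_mulChar_sub_eq_zero (inv_ne_one.mpr hχ), sum_mulChar_sub_mul_inv_sub hχ hbc,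
    Finset.sum_const, Finset.card_univ, nsmul_one]
  ring

end MulCharSums

section QuadraticChar

variable {F : Type*} [Field F] [Fintype F] [DecidableEq F]

theorem sum_one_add_quadraticChar_mul (hF : ringChar F ≠ 2) (ε : ℤˣ) {b c : F} (hbc : b ≠ c) :
    ∑ x, (1 + ε * quadraticChar F (x - b)) * (1 + ε * quadraticChar F (x - c)) =
      (Fintype.card F - 1 : ℤ) := by
  simpa only [(quadraticChar_isQuadratic F).inv, Int.units_coe_mul_self] using
    sum_one_add_mulChar_mul_one_add_inv (quadraticChar_ne_one hF) hbc (ε : ℤ) ε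

theorem zero_le_one_add_units_mul_quadraticChar (ε : ℤˣ) (x : F) :
    0 ≤ 1 + ε * quadraticChar F x := by
  rcases Int.units_eq_one_or ε with rfl | rfl <;>
    rcases quadraticChar_isQuadratic F x with h | h | h <;> simp [h]

theorem cyclic_coloring_no_mono_K52_general (hF : ringChar F ≠ 2) (ε : ℤˣ) {A B : Finset F}
    (hB : 1 < B.card) (hAB : ∀ a ∈ A, ∀ b ∈ B, quadraticChar F (a - b) = ε) :
    4 * A.card < Fintype.card F := by
  obtain ⟨b, hb, c, hc, hbc⟩ := Finset.one_lt_card.mp hB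
  let weight (x : F) : ℤ :=
    (1 + ε * quadraticChar F (x - b)) * (1 + ε * quadraticChar F (x - c))
  have weight_nonneg (x : F) : 0 ≤ weight x :=
    mul_nonneg (zero_le_one_add_units_mul_quadraticChar ε _)
      (zero_le_one_add_units_mul_quadraticChar ε _)
  have weight_eq_four : ∀ a ∈ A, weight a = 4 := fun a ha ↦ by
    simp only [weight, hAB a ha b hb, hAB a ha c hc, Int.units_coe_mul_self]
    norm_num
  have hcount : (4 * A.card : ℤ) ≤ Fintype.card F - 1 :=
    calc (4 * A.card : ℤ) = ∑ a ∈ A, weight a := by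
          rw [Finset.sum_congr rfl weight_eq_four, Finset.sum_const, nsmul_eq_mul, mul_comm]
      _ ≤ ∑ x, weight x := Finset.sum_le_univ_sum_of_nonneg weight_nonneg
      _ = Fintype.card F - 1 := sum_one_add_quadraticChar_mul hF ε hbc
  lia

end QuadraticChar

section ZModSeventeen

local instance fact_prime_seventeen : Fact (Nat.Prime 17) := ⟨by norm_num⟩

theorem mem_C0_iff_quadraticChar_eq_one : ∀ x, x ∈ C0 ↔ quadraticChar (ZMod 17) x = 1 := by
  decide

theorem mem_C1_iff_quadraticChar_eq_neg_one :
    ∀ x, x ∈ C1 ↔ quadraticChar (ZMod 17) x = -1 := by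
  decide

theorem card_ne_five_of_quadraticChar_sub_eq (ε : ℤˣ) {A B : Finset (ZMod 17)}
    (hB : B.card = 2) (hAB : ∀ a ∈ A, ∀ b ∈ B, quadraticChar (ZMod 17) (a - b) = ε) :
    A.card ≠ 5 := by
  have hcard := cyclic_coloring_no_mono_K52_general (by simp [ZMod.ringChar_zmod_n]) ε
    (by lia) hAB
  rw [ZMod.card] at hcard
  lia

end ZModSeventeen

/-- The cyclic 2-coloring of `K₁₇` determined by `C₀` and `C₁` has no monochromatic `K_{5,2}`:
there are no disjoint `A, B ⊆ ZMod 17` with `|A| = 5`, `|B| = 2` such that `a - b ∈ C₀` for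
all `a ∈ A`, `b ∈ B`, and likewise for `C₁`. -/
theorem cyclic_coloring_no_mono_K52 :
    (¬ ∃ A B : Finset (ZMod 17), Disjoint A B ∧ A.card = 5 ∧ B.card = 2 ∧
      ∀ a ∈ A, ∀ b ∈ B, a - b ∈ C0) ∧
    (¬ ∃ A B : Finset (ZMod 17), Disjoint A B ∧ A.card = 5 ∧ B.card = 2 ∧
      ∀ a ∈ A, ∀ b ∈ B, a - b ∈ C1) := by
  simp only [mem_C0_iff_quadraticChar_eq_one, mem_C1_iff_quadraticChar_eq_neg_one]
  exact ⟨fun ⟨_, _, _, hA, hB, hAB⟩ ↦ card_ne_five_of_quadraticChar_sub_eq 1 hB hAB hA,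
    fun ⟨_, _, _, hA, hB, hAB⟩ ↦ card_ne_five_of_quadraticChar_sub_eq (-1) hB hAB hA⟩
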